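/- There is no constant A > 0 such that for every p ∈ (2,∞) and every continuous function f ∈ L^p([0,1]²) with I_p(f) < ∞ one has v_p^{(2)}(f) ≤ A[(1/p)·K_p(f) + (1/p²)·I_p(f)]. That is, the term ω(f;1,1)_p cannot be omitted from the estimate v_p^{(2)}(f) ≤ A[ω(f;1,1)_p + (1/p)K_p(f) + (1/p²)I_p(f)] valid for p > 2. -/

import Mathlib

open MeasureTheory Filter Set
open scoped ENNReal

noncomputable section

/-- A function of two real variables that is 1-periodic in each variable. -/
def BiPeriodic (f : ℝ → ℝ → ℝ) : Prop :=
  (∀ x y, f (x + 1) y = f x y) ∧ (∀ x y, f x (y + 1) = f x y)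

/-- A 1-periodic function of one real variable. -/
def Periodic1 (g : ℝ → ℝ) : Prop := ∀ x, g (x + 1) = g x

/-- The `L^p` norm of a function over `[0,1]^2` (as a value in `[0,∞]`). -/
noncomputable def lpNorm2 (p : ℝ) (f : ℝ → ℝ → ℝ) : ℝ≥0∞ :=
  (∫⁻ x in Set.Icc (0:ℝ) 1, ∫⁻ y in Set.Icc (0:ℝ) 1,
      ENNReal.ofReal (|f x y| ^ p)) ^ (1 / p)

/-- The `L^p` norm of a function over `[0,1]` (as a value in `[0,∞]`). -/
noncomputable def lpNorm1 (p : ℝ) (g : ℝ → ℝ) : ℝ≥0∞ :=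
  (∫⁻ x in Set.Icc (0:ℝ) 1, ENNReal.ofReal (|g x| ^ p)) ^ (1 / p)

/-- Membership in `L^p([0,1]^2)`: measurable, 1-periodic in each variable,
finite `L^p` norm. -/
def MemLp2 (p : ℝ) (f : ℝ → ℝ → ℝ) : Prop :=
  Measurable (Function.uncurry f) ∧ BiPeriodic f ∧ lpNorm2 p f < ⊤

/-- Membership in `L^p([0,1])` for 1-periodic functions of one variable. -/
def MemLp1 (p : ℝ) (g : ℝ → ℝ) : Prop :=
  Measurable g ∧ Periodic1 g ∧ lpNorm1 p g < ⊤

/-- The (total) `L^p` modulus of continuity `ω(f;δ)_p` of a bivariate function. -/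
noncomputable def modulus2 (p : ℝ) (f : ℝ → ℝ → ℝ) (δ : ℝ) : ℝ≥0∞ :=
  ⨆ (h : ℝ × ℝ) (_ : Real.sqrt (h.1 ^ 2 + h.2 ^ 2) ≤ δ),
    lpNorm2 p (fun x y => f (x + h.1) (y + h.2) - f x y)

/-- The `L^p` modulus of continuity `ω(g;δ)_p` of a univariate function. -/
noncomputable def modulus1 (p : ℝ) (g : ℝ → ℝ) (δ : ℝ) : ℝ≥0∞ :=
  ⨆ (h : ℝ) (_ : h ∈ Set.Icc 0 δ), lpNorm1 p (fun x => g (x + h) - g x)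

/-- The mixed `L^p` modulus of continuity `ω(f;u,v)_p`. -/
noncomputable def mixedModulus (p : ℝ) (f : ℝ → ℝ → ℝ) (u v : ℝ) : ℝ≥0∞ :=
  ⨆ (s : ℝ) (_ : s ∈ Set.Icc 0 u) (t : ℝ) (_ : t ∈ Set.Icc 0 v),
    lpNorm2 p (fun x y => f (x + s) (y + t) - f (x + s) y - f x (y + t) + f x y)

/-- `J_p(f) = ∫₀¹ t^{-1/p} ω(f;t)_p dt/t`. -/
noncomputable def Jp (p : ℝ) (f : ℝ → ℝ → ℝ) : ℝ≥0∞ :=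
  ∫⁻ t in Set.Ioc (0:ℝ) 1, ENNReal.ofReal (t ^ (-(1/p)) / t) * modulus2 p f t

/-- `K_p(f) = ∫₀¹ t^{-1/p} [ω(f;t,1)_p + ω(f;1,t)_p] dt/t`. -/
noncomputable def Kp (p : ℝ) (f : ℝ → ℝ → ℝ) : ℝ≥0∞ :=
  ∫⁻ t in Set.Ioc (0:ℝ) 1,
    ENNReal.ofReal (t ^ (-(1/p)) / t) * (mixedModulus p f t 1 + mixedModulus p f 1 t)

/-- `I_p(f) = ∫₀¹∫₀¹ (uv)^{-1/p} ω(f;u,v)_p (du/u)(dv/v)`. -/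
noncomputable def Ip (p : ℝ) (f : ℝ → ℝ → ℝ) : ℝ≥0∞ :=
  ∫⁻ u in Set.Ioc (0:ℝ) 1, ∫⁻ v in Set.Ioc (0:ℝ) 1,
    ENNReal.ofReal ((u * v) ^ (-(1/p)) / (u * v)) * mixedModulus p f u v

/-- The essential supremum norm of `f` over `[0,1]^2`. -/
noncomputable def supNorm2 (f : ℝ → ℝ → ℝ) : ℝ≥0∞ :=
  essSup (fun z : ℝ × ℝ => ENNReal.ofReal |f z.1 z.2|)
    (volume.restrict ((Set.Icc (0:ℝ) 1) ×ˢ (Set.Icc (0:ℝ) 1)))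

/-- The Wiener `p`-variation of a 1-periodic function `g`, as a value in `[0,∞]`:
the supremum over partitions `x₀ < x₁ < ... < xₙ = x₀ + 1` of
`(∑ |g(x_{k+1}) - g(x_k)|^p)^{1/p}`. -/
noncomputable def vp (p : ℝ) (g : ℝ → ℝ) : ℝ≥0∞ :=
  ⨆ (n : ℕ) (x : ℕ → ℝ) (_ : ∀ i < n, x i < x (i + 1)) (_ : x n = x 0 + 1),
    ENNReal.ofReal ((∑ k ∈ Finset.range n, |g (x (k + 1)) - g (x k)| ^ p) ^ (1 / p))

/-- The Hardy–Vitali type total `p`-variation of a bivariate function,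
as a value in `[0,∞]`: the supremum over nets of
`(∑∑ |Δf(x_i,y_j)|^p)^{1/p}`. -/
noncomputable def vp2 (p : ℝ) (f : ℝ → ℝ → ℝ) : ℝ≥0∞ :=
  ⨆ (m : ℕ) (n : ℕ) (x : ℕ → ℝ) (y : ℕ → ℝ)
    (_ : ∀ i < m, x i < x (i + 1)) (_ : x m = x 0 + 1)
    (_ : ∀ j < n, y j < y (j + 1)) (_ : y n = y 0 + 1),
    ENNReal.ofReal ((∑ i ∈ Finset.range m, ∑ j ∈ Finset.range n,
      |f (x (i + 1)) (y (j + 1)) - f (x (i + 1)) (y j)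
        - f (x i) (y (j + 1)) + f (x i) (y j)| ^ p) ^ (1 / p))

/-- Membership in the Hardy class `H_p^{(2)}`: finite Vitali `p`-variation and
all linear sections of bounded `p`-variation. -/
def MemHp2 (p : ℝ) (f : ℝ → ℝ → ℝ) : Prop :=
  vp2 p f < ⊤ ∧ (∀ x, vp p (fun y => f x y) < ⊤) ∧ (∀ y, vp p (fun x => f x y) < ⊤)

/-- Membership in the mixed norm class `V_p[V_p]`: all sections have bounded
`p`-variation and the functions `x ↦ v_p(f_x)`, `y ↦ v_p(f_y)` are themselves
of bounded `p`-variation. -/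
def MemVpVp (p : ℝ) (f : ℝ → ℝ → ℝ) : Prop :=
  (∀ x, vp p (fun y => f x y) < ⊤) ∧ (∀ y, vp p (fun x => f x y) < ⊤) ∧
  vp p (fun x => (vp p (fun y => f x y)).toReal) < ⊤ ∧
  vp p (fun y => (vp p (fun x => f x y)).toReal) < ⊤

/-- `W_p(f) = v_p(φ_p[f]) + v_p(ψ_p[f])`, where `φ_p[f](x) = v_p(f_x)` and
`ψ_p[f](y) = v_p(f_y)`. -/
noncomputable def Wp (p : ℝ) (f : ℝ → ℝ → ℝ) : ℝ≥0∞ :=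
  vp p (fun x => (vp p (fun y => f x y)).toReal)
    + vp p (fun y => (vp p (fun x => f x y)).toReal)

/-- Membership in `L^p_0([0,1]^2)`: membership in `L^p([0,1]^2)` together with
vanishing of the linear mean values `∫₀¹ f(x,t) dt` and `∫₀¹ f(t,y) dt` for a.e.
`x` resp. `y`. -/
def MemLp20 (p : ℝ) (f : ℝ → ℝ → ℝ) : Prop :=
  MemLp2 p f ∧ (∀ᵐ x : ℝ ∂volume, ∫ t in (0:ℝ)..1, f x t = 0) ∧
    (∀ᵐ y : ℝ ∂volume, ∫ t in (0:ℝ)..1, f t y = 0)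

/-- `T` is a trigonometric polynomial of degree `(n,m)` in two variables. -/
def IsTrigPoly2 (n m : ℕ) (T : ℝ → ℝ → ℝ) : Prop :=
  ∃ a b c d : ℕ → ℕ → ℝ, ∀ x y : ℝ,
    T x y = ∑ j ∈ Finset.range (n + 1), ∑ k ∈ Finset.range (m + 1),
      (a j k * Real.cos (2 * Real.pi * j * x) * Real.cos (2 * Real.pi * k * y)
        + b j k * Real.cos (2 * Real.pi * j * x) * Real.sin (2 * Real.pi * k * y)
        + c j k * Real.sin (2 * Real.pi * j * x) * Real.cos (2 * Real.pi * k * y)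
        + d j k * Real.sin (2 * Real.pi * j * x) * Real.sin (2 * Real.pi * k * y))

end

/-!
For `f(x, y) = cos(2πx) cos(2πy)` the mixed modulus is at most `L u v` with `L` independent of `p`.
Since `∫₀¹ t^{-1/p} dt = p'`, this gives `K_p(f) ≤ 2 L p'` and `I_p(f) ≤ L p'²`, so that
`(1/p) K_p(f) + (1/p²) I_p(f) → 0` as `p → ∞`. On the other hand `v_p⁽²⁾(f)` is at least the
absolute mixed difference of `f` over the cell `[0, 1/2]²`, which is `4` for every `p`.
-/

open scoped NNReal Real Topology

section Norm

variable {p : ℝ} {f : ℝ → ℝ → ℝ}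

lemma lpNorm2_le_of_abs_le (hp : 0 < p) {C : ℝ}
    (hC : ∀ x ∈ Icc (0 : ℝ) 1, ∀ y ∈ Icc (0 : ℝ) 1, |f x y| ≤ C) :
    lpNorm2 p f ≤ ENNReal.ofReal C := by
  have hC0 : 0 ≤ C := (abs_nonneg _).trans (hC 0 (by simp) 0 (by simp))
  calc lpNorm2 p f
      ≤ (∫⁻ _ in Icc (0 : ℝ) 1, ∫⁻ _ in Icc (0 : ℝ) 1, ENNReal.ofReal (C ^ p)) ^ (1 / p) := by
        refine ENNReal.rpow_le_rpow ?_ (by positivity)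
        refine setLIntegral_mono' measurableSet_Icc fun x hx ↦ ?_
        refine setLIntegral_mono' measurableSet_Icc fun y hy ↦ ?_
        exact ENNReal.ofReal_le_ofReal (Real.rpow_le_rpow (abs_nonneg _) (hC x hx y hy) hp.le)
    _ = ENNReal.ofReal (C ^ p) ^ (1 / p) := by simp
    _ = ENNReal.ofReal C := by
        rw [← ENNReal.ofReal_rpow_of_nonneg hC0 hp.le, one_div, ENNReal.rpow_rpow_inv hp.ne']

lemma memLp2_of_continuous (hp : 0 < p) (hf : Continuous (Function.uncurry f))
    (hper : BiPeriodic f) : MemLp2 p f := by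
  refine ⟨hf.measurable, hper, ?_⟩
  obtain ⟨C, hC⟩ := (isCompact_Icc.prod isCompact_Icc).exists_bound_of_continuousOn
    (s := Icc (0 : ℝ) 1 ×ˢ Icc (0 : ℝ) 1) hf.continuousOn
  exact (lpNorm2_le_of_abs_le hp fun x hx y hy ↦ hC (x, y) ⟨hx, hy⟩).trans_lt
    ENNReal.ofReal_lt_top

lemma abs_add_sub_le_of_lipschitzWith {g : ℝ → ℝ} {K : ℝ≥0} (hg : LipschitzWith K g) {s u : ℝ}
    (hs : s ∈ Icc 0 u) (x : ℝ) : |g (x + s) - g x| ≤ K * u :=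
  calc |g (x + s) - g x| ≤ K * |x + s - x| := hg.dist_le_mul _ _
    _ = K * s := by rw [add_sub_cancel_left, abs_of_nonneg hs.1]
    _ ≤ K * u := by gcongr; exact hs.2

lemma mixedModulus_mul_le_of_lipschitzWith (hp : 0 < p) {g h : ℝ → ℝ} {K M : ℝ≥0}
    (hg : LipschitzWith K g) (hh : LipschitzWith M h) (u v : ℝ) :
    mixedModulus p (fun x y ↦ g x * h y) u v ≤ ↑(K * M) * ENNReal.ofReal (u * v) := by
  rw [← ENNReal.ofReal_coe_nnreal, ← ENNReal.ofReal_mul (by positivity)]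
  refine iSup₂_le fun s hs ↦ iSup₂_le fun t ht ↦ lpNorm2_le_of_abs_le hp fun x _ y _ ↦ ?_
  have hu : 0 ≤ u := hs.1.trans hs.2
  calc |g (x + s) * h (y + t) - g (x + s) * h y - g x * h (y + t) + g x * h y|
      = |g (x + s) - g x| * |h (y + t) - h y| := by rw [← abs_mul]; ring_nf
    _ ≤ (K * u) * (M * v) := by
        gcongr
        exacts [abs_add_sub_le_of_lipschitzWith hg hs x, abs_add_sub_le_of_lipschitzWith hh ht y]
    _ = ↑(K * M) * (u * v) := by push_cast; ring

end Norm

section WeightedIntegrals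

lemma setLIntegral_Ioc_zero_one_rpow {r : ℝ} (hr : -1 < r) :
    ∫⁻ t in Ioc (0 : ℝ) 1, ENNReal.ofReal (t ^ r) = ENNReal.ofReal (1 / (r + 1)) := by
  have hint : IntegrableOn (fun t : ℝ ↦ t ^ r) (Ioc 0 1) :=
    (intervalIntegral.intervalIntegrable_rpow' (a := 0) (b := 1) hr).1
  have hnonneg : 0 ≤ᵐ[volume.restrict (Ioc (0 : ℝ) 1)] fun t ↦ t ^ r :=
    ae_restrict_of_forall_mem measurableSet_Ioc fun t ht ↦ Real.rpow_nonneg ht.1.le r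
  rw [← ofReal_integral_eq_lintegral_ofReal hint hnonneg,
    ← intervalIntegral.integral_of_le zero_le_one, integral_rpow (Or.inl hr), Real.one_rpow,
    Real.zero_rpow (by linarith), sub_zero]

lemma setLIntegral_Ioc_zero_one_rpow_neg_one_div {p : ℝ} (hp : 1 < p) :
    ∫⁻ t in Ioc (0 : ℝ) 1, ENNReal.ofReal (t ^ (-(1 / p))) = ENNReal.ofReal (p / (p - 1)) := by
  have hp0 : 0 < p := by linarith
  have hlt : 1 / p < 1 := (div_lt_one hp0).2 hp
  have hsum : -(1 / p) + 1 = (p - 1) / p := by field_simp; ring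
  rw [setLIntegral_Ioc_zero_one_rpow (by linarith), hsum, one_div_div]

lemma ofReal_div_mul_ofReal_cancel (a : ℝ) {t : ℝ} (ht : 0 < t) :
    ENNReal.ofReal (a / t) * ENNReal.ofReal t = ENNReal.ofReal a := by
  rw [← ENNReal.ofReal_mul' ht.le, div_mul_cancel₀ a ht.ne']

variable {p : ℝ} {f : ℝ → ℝ → ℝ} {L : ℝ≥0}

lemma Kp_le_of_mixedModulus_le (hp : 1 < p)
    (hf : ∀ u v, mixedModulus p f u v ≤ L * ENNReal.ofReal (u * v)) :
    Kp p f ≤ 2 * L * ENNReal.ofReal (p / (p - 1)) := by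
  rw [← setLIntegral_Ioc_zero_one_rpow_neg_one_div hp, ← lintegral_const_mul' _ _ (by finiteness)]
  refine setLIntegral_mono' measurableSet_Ioc fun t ht ↦ ?_
  calc ENNReal.ofReal (t ^ (-(1 / p)) / t) * (mixedModulus p f t 1 + mixedModulus p f 1 t)
      ≤ ENNReal.ofReal (t ^ (-(1 / p)) / t) *
          (L * ENNReal.ofReal (t * 1) + L * ENNReal.ofReal (1 * t)) := by
        gcongr <;> exact hf _ _
    _ = 2 * L * (ENNReal.ofReal (t ^ (-(1 / p)) / t) * ENNReal.ofReal t) := by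
        rw [mul_one, one_mul]; ring
    _ = 2 * L * ENNReal.ofReal (t ^ (-(1 / p))) := by rw [ofReal_div_mul_ofReal_cancel _ ht.1]

lemma Ip_le_of_mixedModulus_le (hp : 1 < p)
    (hf : ∀ u v, mixedModulus p f u v ≤ L * ENNReal.ofReal (u * v)) :
    Ip p f ≤ L * ENNReal.ofReal (p / (p - 1)) ^ 2 := by
  have integrand_le : ∀ u ∈ Ioc (0 : ℝ) 1, ∀ v ∈ Ioc (0 : ℝ) 1,
      ENNReal.ofReal ((u * v) ^ (-(1 / p)) / (u * v)) * mixedModulus p f u v ≤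
        L * ENNReal.ofReal (u ^ (-(1 / p))) * ENNReal.ofReal (v ^ (-(1 / p))) := by
    rintro u ⟨hu, -⟩ v ⟨hv, -⟩
    calc ENNReal.ofReal ((u * v) ^ (-(1 / p)) / (u * v)) * mixedModulus p f u v
        ≤ ENNReal.ofReal ((u * v) ^ (-(1 / p)) / (u * v)) * (L * ENNReal.ofReal (u * v)) := by
          gcongr; exact hf u v
      _ = L * ENNReal.ofReal ((u * v) ^ (-(1 / p))) := by
          rw [mul_left_comm, ofReal_div_mul_ofReal_cancel _ (mul_pos hu hv)]
      _ = L * ENNReal.ofReal (u ^ (-(1 / p))) * ENNReal.ofReal (v ^ (-(1 / p))) := by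
          rw [Real.mul_rpow hu.le hv.le, ENNReal.ofReal_mul (by positivity), mul_assoc]
  calc Ip p f
      ≤ ∫⁻ u in Ioc (0 : ℝ) 1, ∫⁻ v in Ioc (0 : ℝ) 1,
          L * ENNReal.ofReal (u ^ (-(1 / p))) * ENNReal.ofReal (v ^ (-(1 / p))) :=
        setLIntegral_mono' measurableSet_Ioc fun u hu ↦
          setLIntegral_mono' measurableSet_Ioc (integrand_le u hu)
    _ = ∫⁻ u in Ioc (0 : ℝ) 1,
          L * ENNReal.ofReal (u ^ (-(1 / p))) * ENNReal.ofReal (p / (p - 1)) := by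
        refine lintegral_congr fun u ↦ ?_
        rw [lintegral_const_mul' _ _ (by finiteness),
          setLIntegral_Ioc_zero_one_rpow_neg_one_div hp]
    _ = L * ENNReal.ofReal (p / (p - 1)) ^ 2 := by
        rw [lintegral_mul_const' _ _ (by finiteness), lintegral_const_mul' _ _ (by finiteness),
          setLIntegral_Ioc_zero_one_rpow_neg_one_div hp, mul_assoc, sq]

lemma Kp_add_Ip_le_of_mixedModulus_le (hp : 1 < p)
    (hf : ∀ u v, mixedModulus p f u v ≤ L * ENNReal.ofReal (u * v)) :
    ENNReal.ofReal (1 / p) * Kp p f + ENNReal.ofReal (1 / p ^ 2) * Ip p f ≤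
      2 * L * ENNReal.ofReal (1 / (p - 1)) + L * ENNReal.ofReal (1 / (p - 1)) ^ 2 := by
  have hp0 : 0 < p := by linarith
  have conj_cancel :
      ENNReal.ofReal (1 / p) * ENNReal.ofReal (p / (p - 1)) = ENNReal.ofReal (1 / (p - 1)) := by
    rw [← ENNReal.ofReal_mul (by positivity), one_div_mul_eq_div, div_right_comm,
      div_self hp0.ne']
  have sq_inv : ENNReal.ofReal (1 / p ^ 2) = ENNReal.ofReal (1 / p) ^ 2 := by
    rw [← ENNReal.ofReal_pow (by positivity), one_div_pow]
  calc ENNReal.ofReal (1 / p) * Kp p f + ENNReal.ofReal (1 / p ^ 2) * Ip p f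
      ≤ ENNReal.ofReal (1 / p) * (2 * L * ENNReal.ofReal (p / (p - 1))) +
          ENNReal.ofReal (1 / p ^ 2) * (L * ENNReal.ofReal (p / (p - 1)) ^ 2) := by
        gcongr
        exacts [Kp_le_of_mixedModulus_le hp hf, Ip_le_of_mixedModulus_le hp hf]
    _ = 2 * L * (ENNReal.ofReal (1 / p) * ENNReal.ofReal (p / (p - 1))) +
          L * (ENNReal.ofReal (1 / p) * ENNReal.ofReal (p / (p - 1))) ^ 2 := by
        rw [sq_inv]; ring
    _ = 2 * L * ENNReal.ofReal (1 / (p - 1)) + L * ENNReal.ofReal (1 / (p - 1)) ^ 2 := by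
        rw [conj_cancel]

lemma tendsto_Kp_add_Ip_of_mixedModulus_le
    (hf : ∀ᶠ p in atTop, ∀ u v, mixedModulus p f u v ≤ L * ENNReal.ofReal (u * v)) :
    Tendsto (fun p ↦ ENNReal.ofReal (1 / p) * Kp p f + ENNReal.ofReal (1 / p ^ 2) * Ip p f)
      atTop (𝓝 0) := by
  have inv_tendsto : Tendsto (fun p : ℝ ↦ ENNReal.ofReal (1 / (p - 1))) atTop (𝓝 0) := by
    have : Tendsto (fun p : ℝ ↦ 1 / (p - 1)) atTop (𝓝 0) :=
      (tendsto_atTop_add_const_right atTop (-1) tendsto_id).const_div_atTop 1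
    simpa using ENNReal.tendsto_ofReal this
  have bound_tendsto : Tendsto (fun p : ℝ ↦ 2 * L * ENNReal.ofReal (1 / (p - 1)) +
      L * ENNReal.ofReal (1 / (p - 1)) ^ 2) atTop (𝓝 0) := by
    have linear := ENNReal.Tendsto.const_mul inv_tendsto (a := 2 * L) (.inr (by finiteness))
    have quadratic := ENNReal.Tendsto.const_mul (ENNReal.Tendsto.pow inv_tendsto (n := 2)) (a := L)
      (.inr (by finiteness))
    simpa using linear.add quadratic
  refine tendsto_of_tendsto_of_tendsto_of_le_of_le' tendsto_const_nhds bound_tendsto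
    (.of_forall fun _ ↦ zero_le) ?_
  filter_upwards [eventually_gt_atTop 1, hf] with p hp hfp
  exact Kp_add_Ip_le_of_mixedModulus_le hp hfp

end WeightedIntegrals

section Variation

lemma exists_three_point_net {a b : ℝ} (hab : a < b) (hba : b < a + 1) :
    ∃ x : ℕ → ℝ, x 0 = a ∧ x 1 = b ∧ (∀ i < 2, x i < x (i + 1)) ∧ x 2 = x 0 + 1 := by
  refine ⟨fun | 0 => a | 1 => b | _ => a + 1, rfl, rfl, fun i hi ↦ ?_, rfl⟩
  interval_cases i
  exacts [hab, hba]

lemma ofReal_abs_mixed_difference_le_vp2 {p : ℝ} (hp : 0 < p) (f : ℝ → ℝ → ℝ) {a b c d : ℝ}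
    (hab : a < b) (hba : b < a + 1) (hcd : c < d) (hdc : d < c + 1) :
    ENNReal.ofReal |f b d - f b c - f a d + f a c| ≤ vp2 p f := by
  obtain ⟨x, rfl, rfl, hx, hx2⟩ := exists_three_point_net hab hba
  obtain ⟨y, rfl, rfl, hy, hy2⟩ := exists_three_point_net hcd hdc
  refine le_iSup_of_le 2 <| le_iSup_of_le 2 <| le_iSup_of_le x <| le_iSup_of_le y <|
    le_iSup_of_le hx <| le_iSup_of_le hx2 <| le_iSup_of_le hy <| le_iSup_of_le hy2 <|
    ENNReal.ofReal_le_ofReal ?_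
  rw [one_div, Real.le_rpow_inv_iff_of_pos (abs_nonneg _) (by positivity) hp]
  simp only [Finset.sum_range_succ, Finset.sum_range_zero, zero_add, add_assoc]
  exact le_add_of_nonneg_right (by positivity)

end Variation

section CosProduct

/-- The product of cosines `(x, y) ↦ cos(2πx) cos(2πy)`, the counterexample for all large `p`. -/
noncomputable def cosProduct (x y : ℝ) : ℝ := Real.cos (2 * π * x) * Real.cos (2 * π * y)

lemma continuous_cosProduct : Continuous (Function.uncurry cosProduct) := by
  unfold cosProduct Function.uncurry
  fun_prop

lemma biPeriodic_cosProduct : BiPeriodic cosProduct := by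
  constructor <;> intro x y <;> simp only [cosProduct, mul_add, mul_one, Real.cos_add_two_pi]

lemma lipschitzWith_cos_const_mul (c : ℝ) : LipschitzWith ‖c‖₊ fun x : ℝ ↦ Real.cos (c * x) := by
  simpa [Function.comp_def] using Real.lipschitzWith_cos.comp (lipschitzWith_smul c (β := ℝ))

lemma mixedModulus_cosProduct_le {p : ℝ} (hp : 0 < p) (u v : ℝ) :
    mixedModulus p cosProduct u v ≤
      ↑(‖2 * π‖₊ * ‖2 * π‖₊) * ENNReal.ofReal (u * v) := by
  have hcos := lipschitzWith_cos_const_mul (2 * π)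
  exact mixedModulus_mul_le_of_lipschitzWith hp hcos hcos u v

lemma four_le_vp2_cosProduct {p : ℝ} (hp : 0 < p) : 4 ≤ vp2 p cosProduct := by
  have hcos : Real.cos (2 * π * (1 / 2)) = -1 := by
    rw [mul_one_div, mul_div_cancel_left₀ π two_ne_zero, Real.cos_pi]
  calc (4 : ℝ≥0∞)
      = ENNReal.ofReal |cosProduct (1 / 2) (1 / 2) - cosProduct (1 / 2) 0
          - cosProduct 0 (1 / 2) + cosProduct 0 0| := by
        simp only [cosProduct, hcos, mul_zero, Real.cos_zero]
        norm_num
    _ ≤ vp2 p cosProduct := by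
        apply ofReal_abs_mixed_difference_le_vp2 hp <;> norm_num

end CosProduct

/-- There is no `A > 0` such that for all `p > 2` and all continuous
`f ∈ L^p([0,1]²)` with `I_p(f) < ∞` one has
`v_p⁽²⁾(f) ≤ A [(1/p) K_p(f) + (1/p²) I_p(f)]`: the term `ω(f;1,1)_p` cannot be omitted. -/
theorem statement11 :
    ¬ ∃ A : ℝ, 0 < A ∧
      ∀ p : ℝ, 2 < p → ∀ f : ℝ → ℝ → ℝ,
        Continuous (Function.uncurry f) → MemLp2 p f → Ip p f < ⊤ →
          vp2 p f ≤ ENNReal.ofReal A *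
            (ENNReal.ofReal (1 / p) * Kp p f + ENNReal.ofReal (1 / p ^ 2) * Ip p f) := by
  rintro ⟨A, -, hA⟩
  have modulus_le : ∀ᶠ p in atTop, ∀ u v, mixedModulus p cosProduct u v ≤
      ↑(‖2 * π‖₊ * ‖2 * π‖₊) * ENNReal.ofReal (u * v) := by
    filter_upwards [eventually_gt_atTop 0] with p hp using mixedModulus_cosProduct_le hp
  have rhs_tendsto := ENNReal.Tendsto.const_mul (a := ENNReal.ofReal A)
    (tendsto_Kp_add_Ip_of_mixedModulus_le modulus_le) (.inr ENNReal.ofReal_ne_top)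
  rw [mul_zero] at rhs_tendsto
  refine absurd (ge_of_tendsto rhs_tendsto ?_) (by norm_num : ¬ (4 : ℝ≥0∞) ≤ 0)
  filter_upwards [eventually_gt_atTop 2] with p hp
  have hp0 : 0 < p := by linarith
  have Ip_lt_top : Ip p cosProduct < ⊤ :=
    (Ip_le_of_mixedModulus_le (by linarith) (mixedModulus_cosProduct_le hp0)).trans_lt
      (by finiteness)
  exact (four_le_vp2_cosProduct hp0).trans (hA p hp cosProduct continuous_cosProduct
    (memLp2_of_continuous hp0 continuous_cosProduct biPeriodic_cosProduct) Ip_lt_top)
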